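/- Let x ∈ ℝ^n be such that ∇h(x) has full column rank, let Q(x) be symmetric positive definite, B(x) = (∇h(x)^T Q^{-1}(x)∇h(x))^{-1}∇h(x)^T Q^{-1}(x), and let v = Ψ_Q(x) = −∇h(x)A(x)h(x) − Q^{-1}(x)∇f(x) + Q^{-1}(x)∇h(x)B(x)∇f(x). Then (Q^{-1}(x)∇f(x) + v)^T Q(x) v = ((∇h(x)A(x)h(x))^T Q(x) ∇h(x)A(x) + ∇f(x)^T ∇h(x)A(x) − 2(∇h(x)B(x)∇f(x))^T ∇h(x)A(x)) h(x); consequently |(Q^{-1}(x)∇f(x) + v)^T Q(x) v| ≤ ‖(∇h(x)A(x)h(x))^T Q(x)∇h(x)A(x) + ∇f(x)^T∇h(x)A(x) − 2(∇h(x)B(x)∇f(x))^T∇h(x)A(x)‖ · ‖h(x)‖. -/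

import Mathlib

/- STATEMENT 19: for x with ∇h(x) of full column rank, Q(x) symmetric positive definite
(with inverse Qinv), B(x) = (∇h(x)ᵀQ⁻¹∇h(x))⁻¹∇h(x)ᵀQ⁻¹, and
v = Ψ_Q(x) = −∇h(x)A(x)h(x) − Q⁻¹∇f(x) + Q⁻¹∇h(x)B(x)∇f(x), one has
(Q⁻¹∇f(x) + v)ᵀQv = ((∇h(x)A(x)h(x))ᵀQ∇h(x)A(x) + ∇f(x)ᵀ∇h(x)A(x)
  − 2(∇h(x)B(x)∇f(x))ᵀ∇h(x)A(x)) h(x),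
hence |(Q⁻¹∇f(x) + v)ᵀQv| is at most the norm of that (row-vector) coefficient times
‖h(x)‖.  The row vector rᵀ = uᵀ∇h(x)A(x) with
u = Q∇h(x)A(x)h(x) + ∇f(x) − 2∇h(x)B(x)∇f(x) corresponds to the vector
r = (∇h(x)A(x))ᵀ u, so the identity reads ⟨Q⁻¹∇f(x) + v, Qv⟩ = ⟨r, h(x)⟩ and the bound
|⟨Q⁻¹∇f(x) + v, Qv⟩| ≤ ‖r‖·‖h(x)‖. -/

open scoped RealInnerProductSpace
open ContinuousLinearMap

noncomputable section

/-!
Write `g = ∇f`, `D = ∇hᵀ`, `p = ∇h A h` and `q = ∇h B g`. The multiplier `B g` solves the normal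
equation `D Q⁻¹ q = D Q⁻¹ g`, so `Q⁻¹ (q - g)` lies in `ker D`, which is orthogonal to `q`, an
element of the range of `D†`; hence `⟪Q⁻¹ q, q - g⟫ = 0`. Since `Q⁻¹ g + v = Q⁻¹ q - p` and
`Q v = q - g - Q p`, this pairing is the only part of `⟪Q⁻¹ g + v, Q v⟫` that does not contain `p`.
-/

lemma inner_apply_adjoint_sub_eq_zero_of_normal_equation
    {𝕜 E F : Type*} [RCLike 𝕜]
    [NormedAddCommGroup E] [InnerProductSpace 𝕜 E] [CompleteSpace E]
    [NormedAddCommGroup F] [InnerProductSpace 𝕜 F] [CompleteSpace F]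
    {D : E →L[𝕜] F} {T : E →ₗ[𝕜] E} (hT : T.IsSymmetric) {g : E} {μ : F}
    (hμ : D (T (adjoint D μ)) = D (T g)) :
    inner 𝕜 (T (adjoint D μ)) (adjoint D μ - g) = 0 := by
  have hker : D (T (adjoint D μ - g)) = 0 := by
    rw [map_sub, map_sub, hμ, sub_self]
  rw [hT, adjoint_inner_left, hker, inner_zero_right]

section RealInner

variable {E F G : Type*} [NormedAddCommGroup E] [InnerProductSpace ℝ E]
  [NormedAddCommGroup F] [InnerProductSpace ℝ F]
  [NormedAddCommGroup G] [InnerProductSpace ℝ G]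

lemma inner_sub_sub_eq_of_inner_sub_eq_zero {Q : E →ₗ[ℝ] E} (hQ : Q.IsSymmetric) {g p q w : E}
    (hw : Q w = q) (horth : ⟪w, q - g⟫ = 0) :
    ⟪w - p, q - g - Q p⟫ = ⟪Q p + g - (2 : ℝ) • q, p⟫ :=
  calc ⟪w - p, q - g - Q p⟫ = ⟪w, q - g⟫ - ⟪w, Q p⟫ - ⟪p, q - g - Q p⟫ := by
        rw [inner_sub_left, inner_sub_right w]
    _ = -⟪q, p⟫ - ⟪q - g - Q p, p⟫ := by
        rw [horth, ← hQ w p, hw, real_inner_comm _ p, zero_sub]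
    _ = ⟪Q p + g - (2 : ℝ) • q, p⟫ := by
        rw [← inner_neg_left, ← inner_sub_left]
        congr 1
        module

variable [CompleteSpace E] [CompleteSpace F] [CompleteSpace G]

/-- `D` plays the role of `∇h(x)ᵀ`, `J` of `∇h(x) A(x)`, `c` of `h(x)`, and `μ` of the multiplier
`B(x) ∇f(x)`. -/
theorem stmt_19_general {Q : E ≃ₗ[ℝ] E} (hQ : Q.IsSymmetric) (D : E →L[ℝ] F) (J : G →L[ℝ] E)
    (c : G) {g : E} {μ : F} (hμ : D (Q.symm (adjoint D μ)) = D (Q.symm g)) :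
    let v : E := -J c - Q.symm g + Q.symm (adjoint D μ)
    let r : G := adjoint J (Q (J c) + g - (2 : ℝ) • adjoint D μ)
    ⟪Q.symm g + v, Q v⟫ = ⟪r, c⟫ ∧ |⟪Q.symm g + v, Q v⟫| ≤ ‖r‖ * ‖c‖ := by
  intro v r
  set q := adjoint D μ
  have horth : ⟪Q.symm q, q - g⟫ = 0 :=
    inner_apply_adjoint_sub_eq_zero_of_normal_equation hQ.toLinearMap_symm hμ
  have hleft : Q.symm g + v = Q.symm q - J c := by
    simp only [v]
    abel
  have hright : Q v = q - g - Q (J c) := by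
    simp only [v, map_add, map_sub, map_neg, Q.apply_symm_apply]
    abel
  have hidentity : ⟪Q.symm g + v, Q v⟫ = ⟪r, c⟫ :=
    calc ⟪Q.symm g + v, Q v⟫ = ⟪Q.symm q - J c, q - g - Q (J c)⟫ := by rw [hleft, hright]
      _ = ⟪Q (J c) + g - (2 : ℝ) • q, J c⟫ :=
        inner_sub_sub_eq_of_inner_sub_eq_zero hQ (Q.apply_symm_apply q) horth
      _ = ⟪r, c⟫ := (adjoint_inner_left J c _).symm
  exact ⟨hidentity, hidentity ▸ abs_real_inner_le_norm r c⟩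

end RealInner

theorem stmt_19 {n nh : ℕ}
    (f : EuclideanSpace ℝ (Fin n) → ℝ)
    (h : EuclideanSpace ℝ (Fin n) → EuclideanSpace ℝ (Fin nh))
    (Dh : EuclideanSpace ℝ (Fin n) → (EuclideanSpace ℝ (Fin n) →L[ℝ] EuclideanSpace ℝ (Fin nh)))
    (A : EuclideanSpace ℝ (Fin n) → (EuclideanSpace ℝ (Fin nh) →L[ℝ] EuclideanSpace ℝ (Fin nh)))
    (hf : ContDiff ℝ 1 f) (hh : ContDiff ℝ 1 h)
    (hDh : ∀ y, HasFDerivAt h (Dh y) y)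
    (x : EuclideanSpace ℝ (Fin n))
    (hfull : Function.Surjective (Dh x))
    (Q Qinv : EuclideanSpace ℝ (Fin n) →L[ℝ] EuclideanSpace ℝ (Fin n))
    (hQsym : IsSelfAdjoint Q)
    (hQpos : ∀ w : EuclideanSpace ℝ (Fin n), w ≠ 0 → 0 < ⟪w, Q w⟫)
    (hQinv₁ : ∀ w, Q (Qinv w) = w) (hQinv₂ : ∀ w, Qinv (Q w) = w)
    (Sinv : EuclideanSpace ℝ (Fin nh) →L[ℝ] EuclideanSpace ℝ (Fin nh))
    (hSinv₁ : ∀ w, ((Dh x) ∘L Qinv ∘L (ContinuousLinearMap.adjoint (Dh x))) (Sinv w) = w)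
    (hSinv₂ : ∀ w, Sinv (((Dh x) ∘L Qinv ∘L (ContinuousLinearMap.adjoint (Dh x))) w) = w) :
    -- B(x) = (∇h(x)ᵀ Q⁻¹(x) ∇h(x))⁻¹ ∇h(x)ᵀ Q⁻¹(x)
    let B : EuclideanSpace ℝ (Fin n) →L[ℝ] EuclideanSpace ℝ (Fin nh) :=
      Sinv ∘L (Dh x) ∘L Qinv
    -- v = Ψ_Q(x)
    let v : EuclideanSpace ℝ (Fin n) :=
      -(ContinuousLinearMap.adjoint (Dh x)) (A x (h x)) - Qinv (gradient f x) +
        Qinv ((ContinuousLinearMap.adjoint (Dh x)) (B (gradient f x)))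
    -- r = (∇h(x)A(x))ᵀ (Q∇h(x)A(x)h(x) + ∇f(x) − 2∇h(x)B(x)∇f(x))
    let r : EuclideanSpace ℝ (Fin nh) :=
      (ContinuousLinearMap.adjoint ((ContinuousLinearMap.adjoint (Dh x)) ∘L (A x)))
        (Q ((ContinuousLinearMap.adjoint (Dh x)) (A x (h x))) + gradient f x -
          (2 : ℝ) • ((ContinuousLinearMap.adjoint (Dh x)) (B (gradient f x))))
    ⟪Qinv (gradient f x) + v, Q v⟫ = ⟪r, h x⟫ ∧
      |⟪Qinv (gradient f x) + v, Q v⟫| ≤ ‖r‖ * ‖h x‖ :=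
  stmt_19_general (Q := (ContinuousLinearEquiv.equivOfInverse Q Qinv hQinv₂ hQinv₁).toLinearEquiv)
    hQsym.isSymmetric (Dh x) (adjoint (Dh x) ∘L A x) (h x)
    (hSinv₁ (Dh x (Qinv (gradient f x))))
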